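/- Reduction of entailment to model checking: let KB be an objective formula in conjunctive normal form whose conjuncts are the clauses c₁,…,c_j, let s = {c₁,…,c_j}, let α be an objective formula and k ≥ 0. Then the formula B₀ KB → B_k α is valid (i.e., s' ⊨ˢ (B₀ KB → B_k α) for every set of clauses s') if and only if s ⊨ˢ B_k α. -/

import Mathlib

/-! ## Limited belief: basic syntax and semantics (Schwering 2017, quantifier-free). -/

/-- Standard names (a countably infinite supply). -/
abbrev Name := ℕ

/-- Function terms `f(n₁,…,n_j)`: a function symbol applied to standard names. -/
structure FnTerm where
  sym : ℕ
  args : List Name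
deriving DecidableEq, Inhabited

/-- Literals `t ≈ n` (pos) and `t ≉ n` (neg). -/
inductive Lit where
  | pos (t : FnTerm) (n : Name)
  | neg (t : FnTerm) (n : Name)
deriving DecidableEq

instance : Inhabited Lit := ⟨.pos default 0⟩

/-- The left-hand side (function term) of a literal. -/
def Lit.lhs : Lit → FnTerm
  | .pos t _ => t
  | .neg t _ => t

/-- The right-hand side (standard name) of a literal. -/
def Lit.rhs : Lit → Name
  | .pos _ n => n
  | .neg _ n => n

/-- The negation `¬ℓ` of a literal. -/
def Lit.negate : Lit → Lit
  | .pos t n => .neg t n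
  | .neg t n => .pos t n

/-- Names occurring in a literal. -/
def Lit.names (ℓ : Lit) : Finset Name := insert ℓ.rhs ℓ.lhs.args.toFinset

/-- Two literals are complementary iff they are of the form `t ≈ n` and `t ≉ n`,
or of the form `t ≈ n` and `t ≈ n'` for distinct `n, n'`. -/
def Lit.complementary : Lit → Lit → Bool
  | .pos t n, .neg t' n' => t == t' && n == n'
  | .neg t n, .pos t' n' => t == t' && n == n'
  | .pos t n, .pos t' n' => t == t' && n != n'
  | .neg _ _, .neg _ _ => false

/-- A clause is a (finite) set of literals. -/
abbrev Clause := Finset Lit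

/-- Unit propagation of clause `c` with literal `ℓ`: remove from `c` all
literals complementary to `ℓ`. -/
def Clause.prop (c : Clause) (ℓ : Lit) : Clause :=
  c.filter (fun ℓ' => Lit.complementary ℓ' ℓ = false)

/-- `c₁` subsumes `c₂` iff for every `t ≈ n ∈ c₁`, `t ≈ n ∈ c₂` or `t ≉ n' ∈ c₂`
for some `n' ≠ n`, and for every `t ≉ n ∈ c₁`, `t ≉ n ∈ c₂`. -/
def Clause.subsumes (c₁ c₂ : Clause) : Prop :=
  (∀ t n, Lit.pos t n ∈ c₁ → Lit.pos t n ∈ c₂ ∨ ∃ n', n' ≠ n ∧ Lit.neg t n' ∈ c₂) ∧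
  (∀ t n, Lit.neg t n ∈ c₁ → Lit.neg t n ∈ c₂)

/-- `UP s`: the closure of the set of clauses `s` under unit propagation and
subsumption.  `UP s c` means `c ∈ UP(s)`. -/
inductive UP (s : Set Clause) : Clause → Prop
  | mem {c : Clause} : c ∈ s → UP s c
  | unit {c : Clause} {ℓ : Lit} : UP s {ℓ} → UP s c → UP s (c.prop ℓ)
  | sub {c₁ c₂ : Clause} : UP s c₁ → c₁.subsumes c₂ → UP s c₂

/-- Objective formulas: literals (`atom` is `t ≈ n`, `not atom` is `t ≉ n`),
negation and disjunction. -/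
inductive Form where
  | atom (t : FnTerm) (n : Name)
  | not (φ : Form)
  | or (φ ψ : Form)
deriving DecidableEq

/-- `α ∧ β` abbreviates `¬(¬α ∨ ¬β)`. -/
def Form.and (φ ψ : Form) : Form := .not (.or (.not φ) (.not ψ))

/-- `α → β` abbreviates `¬α ∨ β`. -/
def Form.imp (φ ψ : Form) : Form := .or (.not φ) ψ

/-- A formula is (syntactically) a clause iff it is a disjunction of literals. -/
def Form.isClause : Form → Bool
  | .atom _ _ => true
  | .not (.atom _ _) => true
  | .not _ => false
  | .or φ ψ => φ.isClause && ψ.isClause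

/-- The set of literals of a clause-formula. -/
def Form.lits : Form → Clause
  | .atom t n => {Lit.pos t n}
  | .not (.atom t n) => {Lit.neg t n}
  | .not _ => ∅
  | .or φ ψ => φ.lits ∪ ψ.lits

/-- The limited-belief truth relation `s ⊨ˢ α` for objective formulas:
a clause is true iff it is in `UP(s)`; a non-clause disjunction is true iff one
of its disjuncts is; `¬(α ∨ β)` is true iff `¬α` and `¬β` are; `¬¬α` is true
iff `α` is. -/
def sat (s : Set Clause) : Form → Prop
  | .atom t n => UP s {Lit.pos t n}
  | .not (.atom t n) => UP s {Lit.neg t n}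
  | .not (.not φ) => sat s φ
  | .not (.or φ ψ) => sat s (.not φ) ∧ sat s (.not ψ)
  | .or φ ψ => if (Form.or φ ψ).isClause then UP s (Form.or φ ψ).lits
               else sat s φ ∨ sat s ψ

/-- `satB s k α` is `s ⊨ˢ B_k α`: `B₀ α` holds iff `α` does, and `B_{k+1} α`
holds iff for some function term `t`, for all names `n`,
`s ∪ {t ≈ n} ⊨ˢ B_k α`. -/
def satB (s : Set Clause) : ℕ → Form → Prop
  | 0, φ => sat s φ
  | k+1, φ => ∃ t : FnTerm, ∀ n : Name, satB (s ∪ {({Lit.pos t n} : Clause)}) k φ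

/-- A world maps function terms to standard names. -/
abbrev World := FnTerm → Name

/-- Classical truth of a literal in a world. -/
def Lit.holds (w : World) : Lit → Prop
  | .pos t n => w t = n
  | .neg t n => w t ≠ n

/-- Classical truth of a clause in a world. -/
def Clause.holds (w : World) (c : Clause) : Prop := ∃ ℓ ∈ c, ℓ.holds w

/-- Classical truth of an objective formula in a world. -/
def wsat (w : World) : Form → Prop
  | .atom t n => w t = n
  | .not φ => ¬ wsat w φ
  | .or φ ψ => wsat w φ ∨ wsat w ψ

/-- Classical entailment `s ⊨ α`. -/
def entails (s : Set Clause) (φ : Form) : Prop :=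
  ∀ w : World, (∀ c ∈ s, c.holds w) → wsat w φ

/-- Classical entailment of a clause (disjunction of its literals). -/
def entailsClause (s : Set Clause) (c : Clause) : Prop :=
  ∀ w : World, (∀ c' ∈ s, c'.holds w) → c.holds w

/-- Function terms mentioned in a formula. -/
def Form.terms : Form → Finset FnTerm
  | .atom t _ => {t}
  | .not φ => φ.terms
  | .or φ ψ => φ.terms ∪ ψ.terms

/-- Standard names mentioned in a formula. -/
def Form.names : Form → Finset Name
  | .atom t n => insert n t.args.toFinset
  | .not φ => φ.names
  | .or φ ψ => φ.names ∪ ψ.names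
/-- CNF formulas: clauses, or conjunctions of CNF formulas. -/
inductive IsCNF : Form → Prop
  | clause {φ : Form} : φ.isClause = true → IsCNF φ
  | and {φ ψ : Form} : IsCNF φ → IsCNF ψ → IsCNF (Form.and φ ψ)

/-- The set of clauses of a CNF formula. -/
def Form.cnfClauses : Form → Set Clause
  | .not (.or (.not φ) (.not ψ)) => φ.cnfClauses ∪ ψ.cnfClauses
  | φ => if φ.isClause then {φ.lits} else ∅

/-- The formula corresponding to a literal. -/
def Lit.toForm : Lit → Form
  | .pos t n => .atom t n
  | .neg t n => .not (.atom t n)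

/-- `⋁_{ℓ ∈ ls} ℓ ∨ base`. -/
def Form.bigOrLits (ls : List Lit) (base : Form) : Form :=
  ls.foldr (fun ℓ acc => Form.or ℓ.toForm acc) base

/-- The disjunction of a nonempty list of literals (junk on the empty list). -/
def Form.bigOr : List Lit → Form
  | [] => Form.atom default 0
  | [ℓ] => ℓ.toForm
  | ℓ :: ℓ' :: ls => Form.or ℓ.toForm (Form.bigOr (ℓ' :: ls))

/-- The split-early gadget `s_k`: the least set including `s` that, for every
`ℓ ∈ L`, contains the clauses `¬ℓ ∨ c^ord`, `ℓ ∨ ℓʷ₁ ∨ … ∨ ℓʷ_{k-1} ∨ c^ord`,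
and `ℓ ∨ ¬ℓʷ_i ∨ c^ord` for each `i`, where `c^ord = ℓᵒ₁ ∨ … ∨ ℓᵒ_k`. -/
def gadget (s : Set Clause) (L : List Lit) (lws los : List Lit) : Set Clause :=
  s ∪ {c | ∃ ℓ ∈ L,
        c = insert ℓ.negate los.toFinset ∨
        c = insert ℓ (lws.toFinset ∪ los.toFinset) ∨
        ∃ ℓw ∈ lws, c = insert ℓ (insert ℓw.negate los.toFinset)}

/-! `B₀ KB` is true at `s'` exactly when `UP(s')` contains every clause of `KB`. Belief is preserved
when a set of clauses is replaced by one from which all its members can be derived, so among the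
sets satisfying `B₀ KB` the set of clauses of `KB` itself is the least informative one. -/

/-- Derivability between sets of clauses: every clause of `s'` lies in `UP(s)`. It is the preorder
along which limited belief is monotone. -/
def Derives (s s' : Set Clause) : Prop :=
  ∀ c ∈ s', UP s c

section Derivability

variable {s s' s'' : Set Clause}

theorem UP.of_derives (h : Derives s' s) {c : Clause} (hc : UP s c) : UP s' c := by
  induction hc with
  | mem hmem => exact h _ hmem
  | unit _ _ ihUnit ihClause => exact .unit ihUnit ihClause
  | sub _ hsub ih => exact .sub ih hsub

theorem Derives.of_subset (h : s ⊆ s') : Derives s' s :=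
  fun _ hc => .mem (h hc)

theorem Derives.trans (h : Derives s s') (h' : Derives s' s'') : Derives s s'' :=
  fun c hc => (h' c hc).of_derives h

theorem derives_union_iff : Derives s (s' ∪ s'') ↔ Derives s s' ∧ Derives s s'' := by
  simp only [Derives, Set.mem_union, or_imp, forall_and]

theorem derives_singleton_iff {c : Clause} : Derives s {c} ↔ UP s c := by
  simp only [Derives, Set.mem_singleton_iff, forall_eq]

theorem Derives.union_right (h : Derives s s') (u : Set Clause) : Derives (s ∪ u) (s' ∪ u) :=
  derives_union_iff.2
    ⟨(of_subset Set.subset_union_left).trans h, of_subset Set.subset_union_right⟩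

theorem sat_of_derives (h : Derives s' s) {φ : Form} (hφ : sat s φ) : sat s' φ := by
  fun_induction sat s φ with
  | case1 t n =>
    rw [sat]
    exact hφ.of_derives h
  | case2 t n =>
    rw [sat]
    exact hφ.of_derives h
  | case3 φ ih =>
    rw [sat]
    exact ih hφ
  | case4 φ ψ ihφ ihψ =>
    rw [sat]
    exact hφ.imp ihφ ihψ
  | case5 φ ψ hclause =>
    rw [sat, if_pos hclause]
    exact hφ.of_derives h
  | case6 φ ψ hclause ihφ ihψ =>
    rw [sat, if_neg hclause]
    exact hφ.imp ihφ ihψ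

theorem satB_of_derives (h : Derives s' s) {k : ℕ} {φ : Form} (hφ : satB s k φ) :
    satB s' k φ := by
  induction k generalizing s s' with
  | zero => exact sat_of_derives h hφ
  | succ k ih =>
    obtain ⟨t, ht⟩ := hφ
    exact ⟨t, fun n => ih (h.union_right _) (ht n)⟩

end Derivability

theorem sat_iff_UP_lits {s : Set Clause} {φ : Form} (hφ : φ.isClause) :
    sat s φ ↔ UP s φ.lits := by
  match φ, hφ with
  | .atom _ _, _ => rw [sat, Form.lits]
  | .not (.atom _ _), _ => rw [sat, Form.lits]
  | .or _ _, hφ => rw [sat, if_pos hφ]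

theorem Form.cnfClauses_of_isClause {φ : Form} (hφ : φ.isClause) : φ.cnfClauses = {φ.lits} := by
  match φ, hφ with
  | .atom _ _, _ => rfl
  | .not (.atom _ _), _ => rfl
  | .or _ _, hφ => exact if_pos hφ

theorem sat_and {s : Set Clause} {φ ψ : Form} : sat s (φ.and ψ) ↔ sat s φ ∧ sat s ψ := by
  simp only [Form.and, sat]

theorem Form.cnfClauses_and (φ ψ : Form) :
    (φ.and ψ).cnfClauses = φ.cnfClauses ∪ ψ.cnfClauses := by
  rw [Form.and, Form.cnfClauses]

theorem IsCNF.sat_iff_derives_cnfClauses {s : Set Clause} {φ : Form} (hφ : IsCNF φ) :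
    sat s φ ↔ Derives s φ.cnfClauses := by
  induction hφ with
  | clause hclause =>
    rw [sat_iff_UP_lits hclause, Form.cnfClauses_of_isClause hclause, derives_singleton_iff]
  | and _ _ ihφ ihψ => rw [sat_and, Form.cnfClauses_and, derives_union_iff, ihφ, ihψ]

/-- **Reduction of entailment to model checking** (Lemma 4): for `KB` in CNF
with set of clauses `s`, the formula `B₀ KB → B_k α` is valid (i.e., for every
set of clauses `s'`, if `s' ⊨ˢ B₀ KB` then `s' ⊨ˢ B_k α`) iff `s ⊨ˢ B_k α`. -/
theorem entailment_to_model_checking (KB : Form) (hKB : IsCNF KB)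
    (s : Set Clause) (hs : s = KB.cnfClauses) (α : Form) (k : ℕ) :
    (∀ s' : Set Clause, satB s' 0 KB → satB s' k α) ↔ satB s k α := by
  have satB_KB_iff (s' : Set Clause) : satB s' 0 KB ↔ Derives s' s := by
    rw [satB, hs, hKB.sat_iff_derives_cnfClauses]
  constructor
  · intro hvalid
    exact hvalid s ((satB_KB_iff s).2 (.of_subset subset_rfl))
  · intro hα s' hKB'
    exact satB_of_derives ((satB_KB_iff s').1 hKB') hα
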